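/- Suppose that 1 ≤ |A| ≤ ω and for each α ∈ A, either X_α is the Baire space N, or X_α is a subspace of the Sorgenfrey line R_S with R_S \ X_α at most countable. Then the product space ∏_{α∈A} X_α has a π-tree. -/

import Mathlib

open Set

universe u v

/-- A family `γ` π-refines `δ`: every nonempty member of `δ` contains a
nonempty member of `γ`. -/
def PiRefines {α : Type*} (γ δ : Set (Set α)) : Prop :=
  ∀ D ∈ δ, D.Nonempty → ∃ G ∈ γ, G.Nonempty ∧ G ⊆ D

/-- The finite intersection property. -/
def HasFIP {α : Type*} (γ : Set (Set α)) : Prop :=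
  ∀ δ : Set (Set α), δ ⊆ γ → δ.Finite → δ.Nonempty → (⋂₀ δ).Nonempty

/-- `cofin A` is the family of complements in `A` of finite subsets of `A`. -/
def cofin (A : Set ℕ) : Set (Set ℕ) :=
  {B | ∃ C : Set ℕ, C.Finite ∧ C ⊆ A ∧ B = A \ C}

/-- A foliage tree on `X`: a set-theoretic tree (strict partial order with
well-ordered sets of strict predecessors) with a leaf (a subset of `X`)
attached to each node. -/
structure FoliageTree (X : Type u) where
  Node : Type
  lt : Node → Node → Prop
  lt_irrefl : ∀ a, ¬ lt a a
  lt_trans : ∀ {a b c}, lt a b → lt b c → lt a c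
  wellOrdered : ∀ a : Node, IsWellOrder {b : Node // lt b a} fun x y => lt x.1 y.1
  leaf : Node → Set X

/-- Strict proper-extension order on finite sequences of naturals. -/
def seqLT (a b : List ℕ) : Prop := a <+: b ∧ a ≠ b

namespace FoliageTree

variable {X : Type u}

/-- The sons (immediate successors) of a node. -/
def Sons (F : FoliageTree X) (x : F.Node) : Set F.Node :=
  {s | F.lt x s ∧ ¬ ∃ t, F.lt x t ∧ F.lt t s}

/-- A node is maximal if it has no strict successor. -/
def IsMaxNode (F : FoliageTree X) (x : F.Node) : Prop := ¬ ∃ s, F.lt x s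

/-- A chain of nodes. -/
def IsChainN (F : FoliageTree X) (C : Set F.Node) : Prop :=
  ∀ x ∈ C, ∀ y ∈ C, F.lt x y ∨ x = y ∨ F.lt y x

/-- A branch is a maximal chain. -/
def IsBranch (F : FoliageTree X) (B : Set F.Node) : Prop :=
  F.IsChainN B ∧ ∀ C, F.IsChainN C → B ⊆ C → B = C

/-- The height of a node: the order type of its set of strict predecessors. -/
noncomputable def height (F : FoliageTree X) (v : F.Node) : Ordinal :=
  @Ordinal.type {b : F.Node // F.lt b v} (fun x y => F.lt x.1 y.1) (F.wellOrdered v)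

/-- `shoot F v`: unions of leaves over cofinite sets of sons of `v`. -/
def shoot (F : FoliageTree X) (v : F.Node) : Set (Set X) :=
  {S | ∃ C : Set F.Node, C ⊆ F.Sons v ∧ (F.Sons v \ C).Finite ∧ S = ⋃ s ∈ C, F.leaf s}

/-- `scope F p`: the nodes whose leaf contains `p`. -/
def scope (F : FoliageTree X) (p : X) : Set F.Node := {x | p ∈ F.leaf x}

/-- The union of all leaves. -/
def flesh (F : FoliageTree X) : Set X := ⋃ x, F.leaf x

/-- `F` is a foliage `ω,ω`-tree: its skeleton is order-isomorphic to
`(ω^{<ω}, ⊂)`. -/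
def IsOmegaOmegaTree (F : FoliageTree X) : Prop := Nonempty (F.lt ≃r seqLT)

/-- `F` is locally strict: the leaf of every non-maximal node is the disjoint
union of the leaves of its sons. -/
def LocallyStrict (F : FoliageTree X) : Prop :=
  ∀ x, ¬ F.IsMaxNode x →
    F.leaf x = (⋃ s ∈ F.Sons x, F.leaf s) ∧
      ∀ s ∈ F.Sons x, ∀ t ∈ F.Sons x, s ≠ t → Disjoint (F.leaf s) (F.leaf t)

/-- `F` has strict branches: it has nodes, and along every branch the
intersection of the leaves is a singleton. -/
def StrictBranches (F : FoliageTree X) : Prop :=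
  Nonempty F.Node ∧ ∀ B, F.IsBranch B → ∃ p, (⋂ x ∈ B, F.leaf x) = {p}

/-- `r` is the root: the least node. -/
def IsRoot (F : FoliageTree X) (r : F.Node) : Prop := ∀ x, r = x ∨ F.lt r x

/-- All leaves are open. -/
def OpenIn [TopologicalSpace X] (F : FoliageTree X) : Prop := ∀ x, IsOpen (F.leaf x)

/-- `F` is a Baire foliage tree on `X`. -/
def IsBaireFoliageTree [TopologicalSpace X] (F : FoliageTree X) : Prop :=
  F.OpenIn ∧ F.LocallyStrict ∧ F.IsOmegaOmegaTree ∧ F.StrictBranches ∧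
    ∃ r, F.IsRoot r ∧ F.leaf r = Set.univ

/-- `F` grows into `X`. -/
def GrowsInto [TopologicalSpace X] (F : FoliageTree X) : Prop :=
  ∀ p : X, ∀ U ∈ nhds p, ∃ z ∈ F.scope p, PiRefines (F.shoot z) {U}

/-- `F` is a π-tree on `X`. -/
def IsPiTree [TopologicalSpace X] (F : FoliageTree X) : Prop :=
  F.IsBaireFoliageTree ∧ F.GrowsInto

/-- `rise F p U`: the set of (finite) heights of nodes `v` whose leaf contains
`p` and whose shoot π-refines `{U}`. -/
noncomputable def rise (F : FoliageTree X) (p : X) (U : Set X) : Set ℕ :=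
  {n | ∃ v ∈ F.scope p, PiRefines (F.shoot v) {U} ∧ F.height v = (n : Ordinal)}

/-- `Rise F`: all sets `rise F p U` for `p ∈ X` and `U` a neighbourhood of `p`. -/
def Rise [TopologicalSpace X] (F : FoliageTree X) : Set (Set ℕ) :=
  {R | ∃ p U, U ∈ nhds p ∧ R = F.rise p U}

end FoliageTree

/-- The Sorgenfrey line: the reals with the topology generated by the
half-open intervals `[a, b)`. -/
def SorgLine : Type := ℝ

instance : TopologicalSpace SorgLine :=
  TopologicalSpace.generateFrom {s : Set ℝ | ∃ a b : ℝ, s = Set.Ico a b}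

/-!
A bijection `Φ` from `X` onto `ω^ω` turns `ω^{<ω}` into a foliage tree on `X`, and each member of
the shoot at `Φ p ↾ n` consists of the points whose codes agree with that of `p` before `n` and
have an `n`-th letter outside a finite set. It is convenient to code by sequences of pairs,
interleaved at the end, and to require of each neighbourhood of `p` that for *all* large `n` it
contains every point whose code agrees with that of `p` before `n` and has an `n`-th pair with
large first entry.

This condition passes to countable products: the factor `a` enters at stage `e a`, for an injection
`e : A → ω`, and the finitely many pairs read at stage `n` are merged into one whose first entry is
at most each of theirs. On the Sorgenfrey line, split every half-open interval into half-open
pieces converging to its right end, so that the pieces with large first entry lie to the right of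
any given point. The countably many missing points are deleted one at a time, each by splitting the
piece containing it into infinitely many, which the second entries enumerate.
-/

open Filter Topology PiNat

/-! ### Finite sequences and the tree `ω^{<ω}` -/

section FiniteSequences

variable {s t r : List ℕ}

theorem seqLT_iff_length_lt (hs : s <+: r) (ht : t <+: r) : seqLT s t ↔ s.length < t.length := by
  constructor
  · rintro ⟨hst, hne⟩
    exact hst.length_le.lt_of_ne fun h => hne (hst.eq_of_length h)
  · intro h
    exact ⟨List.prefix_of_prefix_length_le hs ht h.le, fun e => h.ne (congrArg _ e)⟩

theorem seqLT_trans (hst : seqLT s t) (htr : seqLT t r) : seqLT s r :=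
  (seqLT_iff_length_lt (hst.1.trans htr.1) List.prefix_rfl).2 <|
    ((seqLT_iff_length_lt hst.1 List.prefix_rfl).1 hst).trans
      ((seqLT_iff_length_lt htr.1 List.prefix_rfl).1 htr)

theorem isWellOrder_seqLT_below (r : List ℕ) :
    IsWellOrder {s // seqLT s r} fun s t => seqLT s.1 t.1 :=
  let lengthEmbedding : (fun s t : {s // seqLT s r} => seqLT s.1 t.1) ↪r ((· < ·) : ℕ → ℕ → Prop) :=
    { toFun := fun s => s.1.length
      inj' := fun s t h => Subtype.ext <|
        (List.prefix_of_prefix_length_le s.2.1 t.2.1 h.le).eq_of_length h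
      map_rel_iff' := fun {s t} => (seqLT_iff_length_lt s.2.1 t.2.1).symm }
  lengthEmbedding.isWellOrder

theorem exists_eq_append_singleton_of_prefix (hst : s <+: t) (h : t.length = s.length + 1) :
    ∃ k, t = s ++ [k] := by
  obtain ⟨u, rfl⟩ := hst
  obtain ⟨k, rfl⟩ := List.length_eq_one_iff.1 (by simpa using h : u.length = 1)
  exact ⟨k, rfl⟩

theorem seqLT_covers_iff :
    (seqLT s t ∧ ¬ ∃ r, seqLT s r ∧ seqLT r t) ↔ ∃ k, t = s ++ [k] := by
  constructor
  · rintro ⟨⟨⟨u, rfl⟩, hne⟩, hcov⟩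
    obtain _ | ⟨k, u⟩ := u
    · simp at hne
    obtain rfl | hu := eq_or_ne u []
    · exact ⟨k, rfl⟩
    · exact absurd ⟨s ++ [k], ⟨⟨[k], rfl⟩, by simp⟩, ⟨u, by simp⟩, by simpa using hu.symm⟩ hcov
  · rintro ⟨k, rfl⟩
    refine ⟨⟨⟨[k], rfl⟩, by simp⟩, ?_⟩
    rintro ⟨r, hsr, hr⟩
    have hsr_length := (seqLT_iff_length_lt hsr.1 List.prefix_rfl).1 hsr
    have hr_length := (seqLT_iff_length_lt hr.1 List.prefix_rfl).1 hr
    simp only [List.length_append, List.length_singleton] at hr_length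
    lia

/-- The initial segment `f ↾ n`, as a node of the tree of finite sequences. -/
def initSeg (f : ℕ → ℕ) (n : ℕ) : List ℕ := (List.range n).map f

@[simp]
theorem length_initSeg (f : ℕ → ℕ) (n : ℕ) : (initSeg f n).length = n := by simp [initSeg]

theorem initSeg_succ (f : ℕ → ℕ) (n : ℕ) : initSeg f (n + 1) = initSeg f n ++ [f n] := by
  simp [initSeg, List.range_succ]

theorem initSeg_eq_initSeg_iff {f g : ℕ → ℕ} {n : ℕ} :
    initSeg f n = initSeg g n ↔ f ∈ cylinder g n := by
  simp [initSeg, mem_cylinder_iff]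

end FiniteSequences

/-! ### The foliage tree of a coding by sequences of naturals -/

/-- The foliage tree on `X` given by a coding `Φ` of the points of `X`: the leaf at a finite
sequence `s` consists of the points whose code extends `s`. Reducible, so that its nodes are seen
to be lists. -/
abbrev codingTree {X : Type*} (Φ : X → ℕ → ℕ) : FoliageTree X where
  Node := List ℕ
  lt := seqLT
  lt_irrefl := fun _ h => h.2 rfl
  lt_trans := seqLT_trans
  wellOrdered := isWellOrder_seqLT_below
  leaf := fun s => {x | initSeg (Φ x) s.length = s}

/-- The filter of sets containing, for some `m`, all points whose codes agree with `f` before `n`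
and have an `n`-th letter of weight at least `m`. For `w = id` it is generated by the shoot of the
node `f ↾ n` in the foliage tree of the coding. -/
def shootFilter {X L : Type*} (w : L → ℕ) (Φ : X → ℕ → L) (f : ℕ → L) (n : ℕ) : Filter X :=
  comap (fun x => w (Φ x n)) atTop ⊓ 𝓟 (Φ ⁻¹' cylinder f n)

theorem mem_shootFilter {X L : Type*} {w : L → ℕ} {Φ : X → ℕ → L} {f : ℕ → L} {n : ℕ} {U : Set X} :
    U ∈ shootFilter w Φ f n ↔ ∃ m, ∀ x, m ≤ w (Φ x n) → Φ x ∈ cylinder f n → x ∈ U := by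
  rw [shootFilter, ((atTop_basis.comap fun x => w (Φ x n)).inf_principal _).mem_iff]
  simp only [subset_def, true_and, mem_inter_iff, mem_preimage, mem_Ici, and_imp]

namespace codingTree

variable {X : Type*} {Φ : X → ℕ → ℕ} {s : List ℕ} {x : X}

theorem mem_leaf : x ∈ (codingTree Φ).leaf s ↔ initSeg (Φ x) s.length = s := Iff.rfl

theorem leaf_initSeg (f : ℕ → ℕ) (n : ℕ) :
    (codingTree Φ).leaf (initSeg f n) = Φ ⁻¹' cylinder f n := by
  ext x
  rw [mem_leaf, length_initSeg, initSeg_eq_initSeg_iff, mem_preimage]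

theorem mem_leaf_append_singleton {k : ℕ} :
    x ∈ (codingTree Φ).leaf (s ++ [k]) ↔ x ∈ (codingTree Φ).leaf s ∧ Φ x s.length = k := by
  rw [mem_leaf, mem_leaf, List.length_append, List.length_singleton, initSeg_succ, ←
    List.concat_eq_append, ← List.concat_eq_append, List.concat_inj]

theorem sons_eq (s : List ℕ) : (codingTree Φ).Sons s = range fun k => s ++ [k] := by
  ext t
  exact seqLT_covers_iff.trans (exists_congr fun _ => eq_comm)

theorem openIn [TopologicalSpace X] (hΦ : Continuous Φ) : (codingTree Φ).OpenIn := by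
  intro s
  obtain hs | ⟨p, hp⟩ := ((codingTree Φ).leaf s).eq_empty_or_nonempty
  · exact hs ▸ isOpen_empty
  · rw [← mem_leaf.1 hp, leaf_initSeg]
    exact (isOpen_cylinder _ _ _).preimage hΦ

theorem locallyStrict : (codingTree Φ).LocallyStrict := by
  intro (s : List ℕ) _
  rw [sons_eq]
  constructor
  · ext x
    rw [biUnion_range, mem_iUnion, exists_congr fun _ => mem_leaf_append_singleton,
      exists_and_left, and_iff_left ⟨_, rfl⟩]
  · rintro _ ⟨k, rfl⟩ _ ⟨l, rfl⟩ hkl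
    refine disjoint_left.2 fun x hk hl => hkl ?_
    rw [← (mem_leaf_append_singleton.1 hk).2, ← (mem_leaf_append_singleton.1 hl).2]

theorem isRoot_nil : (codingTree Φ).IsRoot ([] : List ℕ) := fun _ =>
  or_iff_not_imp_left.2 fun h => ⟨List.nil_prefix, h⟩

section Branches

variable {B : Set (List ℕ)}

theorem prefix_of_isBranch (hB : (codingTree Φ).IsBranch B) {t : List ℕ} (hs : s ∈ B) (ht : t ∈ B)
    (h : s.length ≤ t.length) : s <+: t := by
  obtain hst | rfl | hts := hB.1 s hs t ht
  · exact hst.1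
  · exact List.prefix_rfl
  · rw [hts.1.eq_of_length (hts.1.length_le.antisymm h)]

theorem mem_of_isBranch (hB : (codingTree Φ).IsBranch B) (h : ∀ t ∈ B, t <+: s ∨ s <+: t) :
    s ∈ B := by
  have comparable : ∀ t ∈ B, seqLT s t ∨ s = t ∨ seqLT t s := by
    intro t ht
    by_cases hst : s = t
    · exact .inr (.inl hst)
    · exact (h t ht).symm.imp (⟨·, hst⟩) fun h => .inr ⟨h, Ne.symm hst⟩
  have hchain : (codingTree Φ).IsChainN (insert s B) := by
    rintro u (rfl | hu) v (rfl | hv)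
    · exact .inr (.inl rfl)
    · exact comparable v hv
    · obtain huv | rfl | hvu := comparable u hu
      exacts [.inr (.inr huv), .inr (.inl rfl), .inl hvu]
    · exact hB.1 u hu v hv
  exact hB.2 _ hchain (subset_insert s B) ▸ mem_insert s B

theorem exists_mem_length_eq_of_isBranch (hB : (codingTree Φ).IsBranch B) (n : ℕ) :
    ∃ s ∈ B, s.length = n := by
  induction n with
  | zero => exact ⟨[], mem_of_isBranch hB fun t _ => .inr List.nil_prefix, rfl⟩
  | succ n ih =>
    obtain ⟨s, hs, rfl⟩ := ih
    by_cases hlong : ∃ t ∈ B, s.length < t.length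
    · obtain ⟨t, ht, hst⟩ := hlong
      refine ⟨t.take (s.length + 1), mem_of_isBranch hB fun u hu => ?_, by simpa using hst⟩
      obtain h | h := le_total u.length t.length
      · exact List.prefix_or_prefix_of_prefix (prefix_of_isBranch hB hu ht h) (List.take_prefix _ t)
      · exact .inr ((List.take_prefix _ t).trans (prefix_of_isBranch hB ht hu h))
    · push Not at hlong
      refine ⟨s ++ [0], mem_of_isBranch hB fun t ht => .inl ?_, by simp⟩
      exact (prefix_of_isBranch hB ht hs (hlong t ht)).trans (List.prefix_append _ _)

theorem exists_eq_range_initSeg_of_isBranch (hB : (codingTree Φ).IsBranch B) :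
    ∃ f, B = range (initSeg f) := by
  choose node hnode hlength using exists_mem_length_eq_of_isBranch hB
  have node_succ : ∀ n, ∃ k, node (n + 1) = node n ++ [k] := fun n =>
    exists_eq_append_singleton_of_prefix
      (prefix_of_isBranch hB (hnode _) (hnode _) (by simp [hlength])) (by simp [hlength])
  choose f hf using node_succ
  have node_eq : ∀ n, node n = initSeg f n := by
    intro n
    induction n with
    | zero => exact List.length_eq_zero_iff.1 (hlength 0)
    | succ n ih => rw [hf, ih, initSeg_succ]
  refine ⟨f, Subset.antisymm (fun s hs => ⟨s.length, ?_⟩) ?_⟩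
  · rw [← node_eq]
    exact (prefix_of_isBranch hB (hnode _) hs (hlength _).le).eq_of_length (hlength _)
  · rintro _ ⟨n, rfl⟩
    exact node_eq n ▸ hnode n

theorem strictBranches (hΦ : Φ.Bijective) : (codingTree Φ).StrictBranches := by
  refine ⟨⟨([] : List ℕ)⟩, fun B hB => ?_⟩
  obtain ⟨f, rfl⟩ := exists_eq_range_initSeg_of_isBranch hB
  obtain ⟨p, rfl⟩ := hΦ.2 f
  refine ⟨p, ?_⟩
  ext x
  rw [biInter_range, iInter_congr (leaf_initSeg (Φ p)), mem_iInter, mem_singleton_iff]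
  refine ⟨fun h => hΦ.1 (funext fun n => h (n + 1) n n.lt_succ_self), ?_⟩
  rintro rfl n
  exact self_mem_cylinder _ n

end Branches

theorem piRefines_shoot_initSeg (hΦ : Φ.Surjective) {f : ℕ → ℕ} {n : ℕ} {U : Set X}
    (hU : U ∈ shootFilter id Φ f n) : PiRefines ((codingTree Φ).shoot (initSeg f n)) {U} := by
  obtain ⟨m, hm⟩ := mem_shootFilter.1 hU
  have mem_son {x : X} {k : ℕ} : x ∈ (codingTree Φ).leaf (initSeg f n ++ [k]) ↔
      Φ x ∈ cylinder f n ∧ Φ x n = k := by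
    rw [mem_leaf_append_singleton, leaf_initSeg, length_initSeg, mem_preimage]
  rintro _ rfl -
  refine ⟨_, ⟨(fun k => initSeg f n ++ [k]) '' Ici m, ?_, ?_, rfl⟩, ?_, ?_⟩
  · rw [sons_eq]
    exact image_subset_range _ _
  · rw [sons_eq]
    refine ((finite_Iio m).image fun k => initSeg f n ++ [k]).subset ?_
    rintro _ ⟨⟨k, rfl⟩, hk⟩
    exact mem_image_of_mem _ <| mem_Iio.2 <| lt_of_not_ge fun h => hk (mem_image_of_mem _ h)
  · obtain ⟨x, hx⟩ := hΦ (Function.update f n m)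
    refine ⟨x, mem_biUnion (mem_image_of_mem _ self_mem_Ici) (mem_son.2 ?_)⟩
    rw [hx]
    exact ⟨update_mem_cylinder f n m, Function.update_self n m f⟩
  · simp only [biUnion_image, iUnion_subset_iff]
    intro k hk x hx
    obtain ⟨hxf, rfl⟩ := mem_son.1 hx
    exact hm x hk hxf

theorem isPiTree [TopologicalSpace X] (hbij : Φ.Bijective) (hcont : Continuous Φ)
    (hgrow : ∀ p, ∀ U ∈ 𝓝 p, ∃ n, U ∈ shootFilter id Φ (Φ p) n) : (codingTree Φ).IsPiTree := by
  refine ⟨⟨openIn hcont, locallyStrict, ⟨RelIso.refl _⟩, strictBranches hbij, [], isRoot_nil, ?_⟩,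
    fun p U hU => ?_⟩
  · exact (leaf_initSeg (Φ := Φ) 0 0).trans (by simp)
  · obtain ⟨n, hn⟩ := hgrow p U hU
    refine ⟨initSeg (Φ p) n, ?_, piRefines_shoot_initSeg hbij.2 hn⟩
    exact (leaf_initSeg (Φ := Φ) (Φ p) n).ge (self_mem_cylinder _ n)

end codingTree

/-! ### π-codings -/

/-- The bijection sending a sequence of pairs `(aᵢ, bᵢ)` to the sequence `a₀, b₀, a₁, b₁, …`. -/
def interleave : (ℕ → ℕ × ℕ) ≃ (ℕ → ℕ) :=
  (Equiv.arrowProdEquivProdArrow ℕ (fun _ => ℕ) fun _ => ℕ).trans <|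
    (Equiv.sumArrowEquivProdArrow ℕ ℕ ℕ).symm.trans <|
      Equiv.natSumNatEquivNat.arrowCongr (Equiv.refl ℕ)

namespace interleave

theorem apply_two_mul (f : ℕ → ℕ × ℕ) (n : ℕ) : interleave f (2 * n) = (f n).1 := by
  have h : Equiv.natSumNatEquivNat.symm (2 * n) = .inl n := by simp
  simp [interleave, h]

theorem apply_two_mul_add_one (f : ℕ → ℕ × ℕ) (n : ℕ) : interleave f (2 * n + 1) = (f n).2 := by
  have h : Equiv.natSumNatEquivNat.symm (2 * n + 1) = .inr n := by simp
  simp [interleave, h]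

protected theorem continuous : Continuous interleave := by
  refine continuous_pi fun i => ?_
  obtain ⟨n, rfl | rfl⟩ := i.even_or_odd'
  · simp only [apply_two_mul]
    fun_prop
  · simp only [apply_two_mul_add_one]
    fun_prop

theorem mem_cylinder_of_mem_cylinder {f g : ℕ → ℕ × ℕ} {n : ℕ}
    (h : interleave f ∈ cylinder (interleave g) (2 * n)) : f ∈ cylinder g n := by
  intro i hi
  apply Prod.ext
  · simpa only [apply_two_mul] using h (2 * i) (by lia)
  · simpa only [apply_two_mul_add_one] using h (2 * i + 1) (by lia)

theorem shootFilter_le {X : Type*} (Φ : X → ℕ → ℕ × ℕ) (f : ℕ → ℕ × ℕ) (n : ℕ) :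
    shootFilter id (fun x => interleave (Φ x)) (interleave f) (2 * n) ≤
      shootFilter Prod.fst Φ f n := by
  simp only [shootFilter, apply_two_mul, id]
  exact inf_le_inf_left _ (principal_mono.2 fun x hx => mem_cylinder_of_mem_cylinder hx)

end interleave

/-- A continuous coding of `X` by sequences of pairs is a π-coding if every neighbourhood of a
point `p` contains, for all large `n`, all points whose codes agree with that of `p` before `n` and
have an `n`-th pair with large first entry. The second entries leave room for enumerating
infinitely many pieces with the same first entry, and *for all large* `n` makes the notion stable
under countable products. -/
structure IsPiCoding {X : Type*} [TopologicalSpace X] (Φ : X ≃ (ℕ → ℕ × ℕ)) : Prop where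
  continuous : Continuous Φ
  eventually_mem_shootFilter :
    ∀ p, ∀ U ∈ 𝓝 p, ∀ᶠ n in atTop, U ∈ shootFilter Prod.fst Φ (Φ p) n

namespace IsPiCoding

variable {X Y : Type*} [TopologicalSpace X] [TopologicalSpace Y]

theorem exists_isPiTree {Φ : X ≃ (ℕ → ℕ × ℕ)} (hΦ : IsPiCoding Φ) :
    ∃ F : FoliageTree X, F.IsPiTree := by
  refine ⟨_, codingTree.isPiTree (Φ.trans interleave).bijective
    (interleave.continuous.comp hΦ.continuous) fun p U hU => ?_⟩
  obtain ⟨n, hn⟩ := (hΦ.eventually_mem_shootFilter p U hU).exists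
  exact ⟨2 * n, interleave.shootFilter_le Φ (Φ p) n hn⟩

theorem comp_homeomorph {Φ : Y ≃ (ℕ → ℕ × ℕ)} (hΦ : IsPiCoding Φ) (h : X ≃ₜ Y) :
    IsPiCoding (h.toEquiv.trans Φ) where
  continuous := hΦ.continuous.comp h.continuous
  eventually_mem_shootFilter p U hU := by
    have hV : h.symm ⁻¹' U ∈ 𝓝 (h p) :=
      h.symm.continuous.continuousAt.preimage_mem_nhds (by simpa using hU)
    filter_upwards [hΦ.eventually_mem_shootFilter _ _ hV] with n hn
    obtain ⟨m, hm⟩ := mem_shootFilter.1 hn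
    exact mem_shootFilter.2 ⟨m, fun x hx hxp => by simpa using hm (h x) hx hxp⟩

theorem of_homeomorph (h : X ≃ₜ (ℕ → ℕ × ℕ)) : IsPiCoding h.toEquiv where
  continuous := h.continuous
  eventually_mem_shootFilter p U hU := by
    have hV : h.symm ⁻¹' U ∈ 𝓝 (h p) :=
      h.symm.continuous.continuousAt.preimage_mem_nhds (by simpa using hU)
    obtain ⟨_, ⟨f, n, rfl⟩, hpf, hfU⟩ :=
      (isTopologicalBasis_cylinders fun _ => ℕ × ℕ).mem_nhds_iff.1 hV
    filter_upwards [eventually_ge_atTop n] with m hm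
    refine mem_shootFilter.2 ⟨0, fun x _ hx => ?_⟩
    rw [← mem_cylinder_iff_eq.1 hpf] at hfU
    simpa using hfU (cylinder_anti _ hm hx)

theorem exists_of_homeomorph_baire (h : X ≃ₜ (ℕ → ℕ)) :
    ∃ Φ : X ≃ (ℕ → ℕ × ℕ), IsPiCoding Φ :=
  ⟨_, of_homeomorph <| h.trans <| .piCongrRight fun _ =>
    Nat.pairEquiv.symm.toHomeomorphOfDiscrete⟩

end IsPiCoding

/-! ### Countable products -/

theorem exists_injective_apply_eq_zero {A : Type*} [Countable A] (a₀ : A) :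
    ∃ e : A → ℕ, e.Injective ∧ e a₀ = 0 := by
  obtain ⟨e, he⟩ := exists_injective_nat A
  exact ⟨Equiv.swap (e a₀) 0 ∘ e, (Equiv.swap _ _).injective.comp he, by simp⟩

theorem exists_equiv_prod_nat_fst_eq {D K : Type*} [Countable D] (κ : D → K)
    (hκ : ∀ k, Infinite {d // κ d = k}) : ∃ E : D ≃ K × ℕ, ∀ d, (E d).1 = κ d := by
  have enum : ∀ k, Nonempty ({d // κ d = k} ≃ ℕ) := fun k =>
    have := hκ k
    nonempty_equiv_of_countable
  exact ⟨(Equiv.sigmaFiberEquiv κ).symm.trans <|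
    (Equiv.sigmaCongrRight fun k => (enum k).some).trans (Equiv.sigmaEquivProd K ℕ), fun _ => rfl⟩

theorem exists_equiv_pi_fst_le (B : Type*) [Finite B] [Nonempty B] :
    ∃ Θ : (B → ℕ × ℕ) ≃ ℕ × ℕ, ∀ d b, (Θ d).1 ≤ (d b).1 := by
  -- Every value is attained infinitely often by the minimum, since the second entries are free.
  obtain ⟨E, hE⟩ := exists_equiv_prod_nat_fst_eq (fun d : B → ℕ × ℕ => ⨅ b, (d b).1) fun k => by
    refine Infinite.of_injective
      (fun j : ℕ => (⟨fun _ => (k, j), ciInf_const⟩ : {d : B → ℕ × ℕ // ⨅ b, (d b).1 = k})) ?_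
    intro i j hij
    simpa using congrFun (congrArg Subtype.val hij) (Classical.arbitrary B)
  exact ⟨E, fun d b => (hE d).trans_le (ciInf_le (OrderBot.bddBelow _) b)⟩

section Product

variable {A : Type*} (e : A → ℕ)

/-- The bijection arranging a family of sequences `g a` in which `g a` starts at time `e a`:
at time `n` it lists the letters `g a (n - e a)` for the indices `a` with `e a ≤ n`. -/
def delay (L : Type*) : (A → ℕ → L) ≃ (∀ n, {a // e a ≤ n} → L) where
  toFun g n a := g a (n - e a)
  invFun h a k := h (k + e a) ⟨a, Nat.le_add_left _ _⟩
  left_inv g := by simp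
  right_inv h := by
    funext n a
    have h_congr : ∀ m (hm : m = n), h m ⟨a, hm ▸ a.2⟩ = h n a := by rintro _ rfl; rfl
    exact h_congr _ (Nat.sub_add_cancel a.2)

variable {X : A → Type*} (Φ : ∀ a, X a ≃ (ℕ → ℕ × ℕ))
  (Θ : ∀ n, ({a // e a ≤ n} → ℕ × ℕ) ≃ ℕ × ℕ)

/-- The coding of a product in which the factor `a` enters at stage `e a`, the letters of the
factors present at stage `n` being merged into one pair by `Θ n`. -/
def productCoding : (∀ a, X a) ≃ (ℕ → ℕ × ℕ) :=
  (Equiv.piCongrRight Φ).trans <| (delay e (ℕ × ℕ)).trans <| .piCongrRight Θ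

theorem productCoding_apply (x : ∀ a, X a) (n : ℕ) :
    productCoding e Φ Θ x n = Θ n fun a => Φ a (x a) (n - e a) := rfl

variable {e Φ Θ}

theorem productCoding_apply_eq_iff {x y : ∀ a, X a} {n : ℕ} :
    productCoding e Φ Θ x n = productCoding e Φ Θ y n ↔
      ∀ a, e a ≤ n → Φ a (x a) (n - e a) = Φ a (y a) (n - e a) := by
  simp [productCoding_apply, funext_iff]

theorem tendsto_eval_shootFilter (hΘ : ∀ n d b, (Θ n d).1 ≤ (d b).1) (p : ∀ a, X a) {a : A} {n : ℕ}
    (hn : e a ≤ n) :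
    Tendsto (fun x => x a) (shootFilter Prod.fst (productCoding e Φ Θ) (productCoding e Φ Θ p) n)
      (shootFilter Prod.fst (Φ a) (Φ a (p a)) (n - e a)) := by
  intro U hU
  obtain ⟨m, hm⟩ := mem_shootFilter.1 hU
  refine mem_shootFilter.2 ⟨m, fun x hx hxp => hm _ (hx.trans (hΘ n _ ⟨a, hn⟩)) fun i hi => ?_⟩
  simpa using productCoding_apply_eq_iff.1 (hxp (i + e a) (by lia)) a (by lia)

variable [∀ a, TopologicalSpace (X a)]

theorem isPiCoding_productCoding [∀ n, Finite {a // e a ≤ n}] (hΘ : ∀ n d b, (Θ n d).1 ≤ (d b).1)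
    (hΦ : ∀ a, IsPiCoding (Φ a)) : IsPiCoding (productCoding e Φ Θ) where
  continuous := by
    have hΦ_continuous := fun a => (hΦ a).continuous
    refine continuous_pi fun n => (continuous_of_discreteTopology (f := Θ n)).comp <|
      continuous_pi fun a => ?_
    change Continuous fun x : ∀ a, X a => Φ a (x a) (n - e a)
    fun_prop
  eventually_mem_shootFilter p U hU := by
    rw [nhds_pi, Filter.mem_pi] at hU
    obtain ⟨J, hJ, t, ht, htU⟩ := hU
    have eventually_mem : ∀ᶠ n in atTop, ∀ a ∈ J, e a ≤ n ∧
        t a ∈ shootFilter Prod.fst (Φ a) (Φ a (p a)) (n - e a) :=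
      (eventually_all_finite hJ).2 fun a _ => (eventually_ge_atTop _).and <|
        (tendsto_sub_atTop_nat _).eventually ((hΦ a).eventually_mem_shootFilter _ _ (ht a))
    filter_upwards [eventually_mem] with n hn
    refine mem_of_superset ((biInter_mem hJ).2 fun a ha => ?_) (pi_def J t ▸ htU)
    exact tendsto_eval_shootFilter hΘ p (hn a ha).1 (hn a ha).2

theorem exists_isPiCoding_pi [Countable A] [Nonempty A]
    (hX : ∀ a, ∃ Φ : X a ≃ (ℕ → ℕ × ℕ), IsPiCoding Φ) :
    ∃ Ψ : (∀ a, X a) ≃ (ℕ → ℕ × ℕ), IsPiCoding Ψ := by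
  choose Φ hΦ using hX
  obtain ⟨e, he, he₀⟩ := exists_injective_apply_eq_zero (Classical.arbitrary A)
  have hfinite : ∀ n, Finite {a // e a ≤ n} := fun n =>
    ((finite_Iic n).preimage he.injOn).to_subtype
  have hnonempty : ∀ n, Nonempty {a // e a ≤ n} := fun n => ⟨_, he₀.trans_le n.zero_le⟩
  choose Θ hΘ using fun n => exists_equiv_pi_fst_le {a // e a ≤ n}
  exact ⟨_, isPiCoding_productCoding hΘ hΦ⟩

end Product

/-! ### Partitions into half-open intervals -/

/-- A partition of `I` into the nonempty half-open intervals `[l k, r k)`. -/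
structure IsIcoPartition {ι α : Type*} [LinearOrder α] (I : Set α) (l r : ι → α) : Prop where
  lt : ∀ k, l k < r k
  iUnion_eq : ⋃ k, Ico (l k) (r k) = I
  disjoint : Pairwise fun i j => Disjoint (Ico (l i) (r i)) (Ico (l j) (r j))

namespace IsIcoPartition

variable {ι κ α : Type*} [LinearOrder α] {I J T : Set α} {l r : ι → α}

theorem Ico_subset (h : IsIcoPartition I l r) (k : ι) : Ico (l k) (r k) ⊆ I :=
  h.iUnion_eq ▸ subset_iUnion (fun k => Ico (l k) (r k)) k

theorem of_strictMono {s : ℕ → α} {v : α} (hs : StrictMono s) (hv : IsLUB (range s) v) :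
    IsIcoPartition (Ico (s 0) v) s fun k => s (k + 1) where
  lt k := hs k.lt_succ_self
  iUnion_eq := by
    refine Subset.antisymm (iUnion_subset fun k => ?_) fun x hx => ?_
    · exact Ico_subset_Ico (hs.monotone k.zero_le) (hv.1 (mem_range_self _))
    · obtain ⟨_, ⟨k, rfl⟩, hk⟩ := (lt_isLUB_iff hv).1 hx.2
      exact iUnion₂_subset_iUnion _ _ (Ico_subset_biUnion_Ico k s ⟨hx.1, hk⟩)
  disjoint := hs.monotone.pairwise_disjoint_on_Ico_succ

theorem of_strictAnti {s : ℕ → α} {u : α} (hs : StrictAnti s) (hu : IsGLB (range s) u) :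
    IsIcoPartition (Ioo u (s 0)) (fun k => s (k + 1)) s where
  lt k := hs k.lt_succ_self
  iUnion_eq := by
    have Ico_subset_iUnion : ∀ k, Ico (s k) (s 0) ⊆ ⋃ j, Ico (s (j + 1)) (s j) := by
      intro k
      induction k with
      | zero => simp
      | succ k ih =>
        exact Ico_subset_Ico_union_Ico.trans (union_subset (subset_iUnion_of_subset k le_rfl) ih)
    refine Subset.antisymm (iUnion_subset fun k x hx => ?_) fun x hx => ?_
    · have hu_lt : u < s (k + 1) := (hu.1 (mem_range_self _)).trans_lt (hs (k + 1).lt_succ_self)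
      exact ⟨hu_lt.trans_le hx.1, hx.2.trans_le (hs.antitone k.zero_le)⟩
    · obtain ⟨_, ⟨k, rfl⟩, hk⟩ := (isGLB_lt_iff hu).1 hx.1
      exact Ico_subset_iUnion k ⟨hk.le, hx.2⟩
  disjoint := hs.antitone.pairwise_disjoint_on_Ico_succ

theorem comp_equiv (h : IsIcoPartition I l r) (e : κ ≃ ι) : IsIcoPartition I (l ∘ e) (r ∘ e) where
  lt k := h.lt (e k)
  iUnion_eq := (e.surjective.iUnion_comp fun k => Ico (l k) (r k)).trans h.iUnion_eq
  disjoint := h.disjoint.comp_of_injective e.injective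

theorem sum {l' r' : κ → α} (h : IsIcoPartition I l r) (h' : IsIcoPartition J l' r')
    (hIJ : Disjoint I J) : IsIcoPartition (I ∪ J) (Sum.elim l l') (Sum.elim r r') where
  lt := by rintro (i | j); exacts [h.lt i, h'.lt j]
  iUnion_eq := by simp [iUnion_sum, h.iUnion_eq, h'.iUnion_eq]
  disjoint := by
    have hcross : ∀ i j, Disjoint (Ico (l i) (r i)) (Ico (l' j) (r' j)) := fun i j =>
      hIJ.mono (h.Ico_subset i) (h'.Ico_subset j)
    rintro (i | i) (j | j) hij
    exacts [h.disjoint fun e => hij (congrArg _ e), hcross i j, (hcross j i).symm,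
      h'.disjoint fun e => hij (congrArg _ e)]

theorem refine {l' r' : ι → κ → α} (h : IsIcoPartition I l r)
    (h' : ∀ i, IsIcoPartition (Ico (l i) (r i) \ T) (l' i) (r' i)) :
    IsIcoPartition (I \ T) (fun j : ι × κ => l' j.1 j.2) fun j => r' j.1 j.2 where
  lt j := (h' j.1).lt j.2
  iUnion_eq := by
    rw [iUnion_prod', iUnion_congr fun i => (h' i).iUnion_eq, ← iUnion_sdiff, h.iUnion_eq]
  disjoint := by
    rintro ⟨i, k⟩ ⟨j, m⟩ hne
    obtain rfl | hij := eq_or_ne i j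
    · exact (h' i).disjoint fun e => hne (congrArg _ e)
    · exact (h.disjoint hij).mono (((h' i).Ico_subset k).trans sdiff_subset)
        (((h' j).Ico_subset m).trans sdiff_subset)

end IsIcoPartition

theorem exists_strictMono_tendsto_sub_le {a b ε : ℝ} (hab : a < b) (hε : 0 < ε) :
    ∃ s : ℕ → ℝ, StrictMono s ∧ Tendsto s atTop (𝓝 b) ∧ s 0 = a ∧
      ∀ k, s (k + 1) - s k ≤ ε := by
  obtain ⟨c, hc, rfl⟩ : ∃ c, 0 < c ∧ b - c = a := ⟨b - a, sub_pos.2 hab, sub_sub_cancel b a⟩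
  -- A concave hyperbola with initial slope `ε`, so that no increment exceeds `ε`.
  let s : ℕ → ℝ := fun k => b - c ^ 2 / (c + k * ε)
  have s_succ_sub : ∀ k, s (k + 1) - s k = c ^ 2 * ε / ((c + k * ε) * (c + (k + 1) * ε)) := by
    intro k
    have : 0 < c + k * ε := by positivity
    have : 0 < c + (k + 1) * ε := by positivity
    simp only [s, Nat.cast_add_one]
    field_simp
    ring
  refine ⟨s, strictMono_nat_of_lt_succ fun k => ?_, ?_, ?_, fun k => ?_⟩
  · rw [← sub_pos, s_succ_sub]
    positivity
  · have hden : Tendsto (fun k : ℕ => c + k * ε) atTop atTop :=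
      tendsto_atTop_add_const_left _ _ (tendsto_natCast_atTop_atTop.atTop_mul_const hε)
    simpa using (hden.const_div_atTop (c ^ 2)).const_sub b
  · simp [s, pow_two, hc.ne']
  · rw [s_succ_sub, div_le_iff₀ (by positivity), mul_comm, pow_two]
    gcongr <;> exact le_add_of_nonneg_right (by positivity)

/-- `I` is a union of a sequence of disjoint nonempty half-open intervals. -/
def HasIcoPartition (I : Set ℝ) : Prop := ∃ l r : ℕ → ℝ, IsIcoPartition I l r

section HasIcoPartition

variable {I J T : Set ℝ} {a b : ℝ}

theorem hasIcoPartition_Ico (hab : a < b) : HasIcoPartition (Ico a b) := by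
  obtain ⟨s, hs, hlim, rfl, -⟩ := exists_strictMono_tendsto_sub_le hab one_pos
  exact ⟨_, _, .of_strictMono hs (isLUB_of_tendsto_atTop hs.monotone hlim)⟩

theorem hasIcoPartition_Ioo (hab : a < b) : HasIcoPartition (Ioo a b) := by
  obtain ⟨s, hs, hlim, hs₀, -⟩ := exists_strictMono_tendsto_sub_le (neg_lt_neg hab) one_pos
  have hneg : StrictAnti fun k => -s k := hs.neg
  have hglb : IsGLB (range fun k => -s k) a :=
    isGLB_of_tendsto_atTop hneg.antitone (by simpa using hlim.neg)
  have hpart := IsIcoPartition.of_strictAnti hneg hglb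
  rw [hs₀, neg_neg] at hpart
  exact ⟨_, _, hpart⟩

theorem HasIcoPartition.union (hI : HasIcoPartition I) (hJ : HasIcoPartition J)
    (hIJ : Disjoint I J) : HasIcoPartition (I ∪ J) := by
  obtain ⟨l, r, h⟩ := hI
  obtain ⟨l', r', h'⟩ := hJ
  exact ⟨_, _, (h.sum h' hIJ).comp_equiv Equiv.natSumNatEquivNat.symm⟩

theorem hasIcoPartition_Ico_sdiff (hab : a < b) (hT : T.Subsingleton) :
    HasIcoPartition (Ico a b \ T) := by
  obtain rfl | ⟨q, rfl⟩ := hT.eq_empty_or_singleton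
  · simpa using hasIcoPartition_Ico hab
  obtain hq | hq := em' (q ∈ Ico a b)
  · rw [sdiff_singleton_eq_self hq]
    exact hasIcoPartition_Ico hab
  obtain rfl | haq := hq.1.eq_or_lt
  · rw [Ico_sdiff_left]
    exact hasIcoPartition_Ioo hab
  · have hdisj : Disjoint (Ico a q) (Ioo q b) :=
      disjoint_left.2 fun x hx hx' => hx.2.not_gt hx'.1
    have hunion : Ico a b \ {q} = Ico a q ∪ Ioo q b := by
      rw [← Ico_sdiff_left, ← Ico_union_Ico_eq_Ico hq.1 hq.2.le, union_sdiff_distrib,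
        sdiff_singleton_eq_self right_notMem_Ico]
    rw [hunion]
    exact (hasIcoPartition_Ico haq).union (hasIcoPartition_Ioo hq.2) hdisj

end HasIcoPartition

/-! ### Splitting the cells of the real line -/

/-- The sets occurring in the scheme of intervals below: the whole line at its root, and bounded
half-open intervals at all other nodes. -/
def IsCell (I : Set ℝ) : Prop := I = univ ∨ ∃ a b, a < b ∧ I = Ico a b

/-- A partition of `I \ T` into half-open intervals of length at most `ε` whose closures lie in `I`
and, if `I` is bounded above, whose left end points pass along the filter `F` every point of `I`. -/
structure IsSplitting (I T : Set ℝ) (ε : ℝ) {ι : Type*} (F : Filter ι) (l r : ι → ℝ) : Prop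
    extends IsIcoPartition (I \ T) l r where
  length_le : ∀ k, r k - l k ≤ ε
  Icc_subset : ∀ k, Icc (l k) (r k) ⊆ I
  eventually_le : BddAbove I → ∀ y ∈ I, ∀ᶠ k in F, y ≤ l k

theorem exists_isSplitting_univ {ε : ℝ} (hε : 0 < ε) :
    ∃ l r : ℕ → ℝ, IsSplitting univ ∅ ε atTop l r := by
  have hpart : IsIcoPartition univ (fun k : ℤ => k • ε) (fun k => (k + 1) • ε) :=
    { lt := fun k => by simp [add_smul, hε]
      iUnion_eq := iUnion_Ico_zsmul hε
      disjoint := pairwise_disjoint_Ico_zsmul ε }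
  refine ⟨_, _, ⟨by simpa using hpart.comp_equiv Equiv.intEquivNat.symm, fun k => ?_,
    fun _ => subset_univ _, fun h => (not_bddAbove_univ h).elim⟩⟩
  simp [add_one_mul]

theorem exists_isSplitting_Ico {a b ε : ℝ} (hab : a < b) (hε : 0 < ε) :
    ∃ l r : ℕ → ℝ, IsSplitting (Ico a b) ∅ ε atTop l r := by
  obtain ⟨s, hs, hlim, rfl, hstep⟩ := exists_strictMono_tendsto_sub_le hab hε
  have hlub := isLUB_of_tendsto_atTop hs.monotone hlim
  refine ⟨_, _, ⟨sdiff_empty.symm ▸ .of_strictMono hs hlub, hstep, fun k => ?_,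
    fun _ y hy => (hlim.eventually_const_lt hy.2).mono fun _ => le_of_lt⟩⟩
  exact Icc_subset_Ico_iff (hs k.lt_succ_self).le |>.2 ⟨hs.monotone k.zero_le,
    (hs (k + 1).lt_succ_self).trans_le (hlub.1 (mem_range_self _))⟩

theorem IsCell.exists_isSplitting_empty {I : Set ℝ} (hI : IsCell I) {ε : ℝ} (hε : 0 < ε) :
    ∃ l r : ℕ → ℝ, IsSplitting I ∅ ε atTop l r := by
  obtain rfl | ⟨a, b, hab, rfl⟩ := hI
  exacts [exists_isSplitting_univ hε, exists_isSplitting_Ico hab hε]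

theorem IsSplitting.exists_isSplitting_sdiff {I T : Set ℝ} {ε : ℝ} {ι : Type*} {F : Filter ι}
    {u v : ι → ℝ} (h : IsSplitting I ∅ ε F u v) (hT : T.Subsingleton) :
    ∃ l r : ι × ℕ → ℝ, IsSplitting I T ε (comap Prod.fst F) l r := by
  choose l r hlr using fun k => hasIcoPartition_Ico_sdiff (h.lt k) hT
  have hpart : IsIcoPartition I u v := by simpa using h.toIsIcoPartition
  have hle : ∀ k j, u k ≤ l k j ∧ r k j ≤ v k := fun k j =>
    (Ico_subset_Ico_iff ((hlr k).lt j)).1 <| ((hlr k).Ico_subset j).trans sdiff_subset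
  refine ⟨_, _, ⟨hpart.refine hlr, fun j => ?_, fun j => ?_, fun hI y hy => ?_⟩⟩
  · linarith [hle j.1 j.2, h.length_le j.1]
  · exact (Icc_subset_Icc (hle _ _).1 (hle _ _).2).trans (h.Icc_subset j.1)
  · exact ((h.eventually_le hI y hy).comap Prod.fst).mono fun j hj => hj.trans (hle _ _).1

theorem IsCell.exists_isSplitting {I T : Set ℝ} (hI : IsCell I) (hT : T.Subsingleton) {ε : ℝ}
    (hε : 0 < ε) : ∃ l r : ℕ × ℕ → ℝ, IsSplitting I T ε (comap Prod.fst atTop) l r := by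
  obtain ⟨u, v, h⟩ := hI.exists_isSplitting_empty hε
  exact h.exists_isSplitting_sdiff hT

/-! ### Codings from schemes of sets -/

section Scheme

variable {X L : Type*} {A : List L → Set X}

theorem res_eq_res_of_mem (hA : CantorScheme.Disjoint A) (hsub : ∀ l k, A (k :: l) ⊆ A l)
    {f g : ℕ → L} {x : X} {n : ℕ} (hf : x ∈ A (res f n)) (hg : x ∈ A (res g n)) :
    res f n = res g n := by
  induction n with
  | zero => rfl
  | succ n ih =>
    rw [res_succ] at hf hg
    have hres := ih (hsub _ _ hf) (hsub _ _ hg)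
    rw [res_succ, res_succ, hres]
    rw [hres] at hf
    by_contra hne
    exact disjoint_left.1 (hA _ fun h => hne (congrArg (· :: res g n) h)) hf hg

theorem exists_forall_mem_res (hnil : A [] = univ) (hcons : ∀ l, ⋃ k, A (k :: l) = A l) (x : X) :
    ∃ f : ℕ → L, ∀ n, x ∈ A (res f n) := by
  choose next hnext using fun l : {l // x ∈ A l} => mem_iUnion.1 ((hcons l).symm ▸ l.2)
  let node : ℕ → {l // x ∈ A l} :=
    Nat.rec ⟨[], hnil ▸ mem_univ x⟩ fun _ l => ⟨next l :: l, hnext l⟩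
  have res_eq : ∀ n, res (fun n => next (node n)) n = (node n).1 := by
    intro n
    induction n with
    | zero => rfl
    | succ n ih => rw [res_succ, ih]
  exact ⟨_, fun n => (res_eq n).symm ▸ (node n).2⟩

theorem exists_equiv_of_scheme [TopologicalSpace X] [TopologicalSpace L] [DiscreteTopology L]
    (hnil : A [] = univ) (hcons : ∀ l, ⋃ k, A (k :: l) = A l) (hA : CantorScheme.Disjoint A)
    (hopen : ∀ l, IsOpen (A l)) (hunique : ∀ f, ∃! x, ∀ n, x ∈ A (res f n)) :
    ∃ Φ : X ≃ (ℕ → L), Continuous Φ ∧ ∀ x f n, x ∈ A (res f n) ↔ Φ x ∈ cylinder f n := by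
  have hres {f g x n} := res_eq_res_of_mem hA (fun l k => hcons l ▸ subset_iUnion (A <| · :: l) k)
    (f := f) (g := g) (x := x) (n := n)
  choose point hpoint hpoint_unique using hunique
  have hbij : point.Bijective := by
    refine ⟨fun f g hfg => ?_, fun x => ?_⟩
    · exact res_injective (funext fun n => hres (hpoint f n) (hfg ▸ hpoint g n))
    · obtain ⟨f, hf⟩ := exists_forall_mem_res hnil hcons x
      exact ⟨f, (hpoint_unique f x hf).symm⟩
  let Φ := (Equiv.ofBijective point hbij).symm
  have mem_res_apply : ∀ x n, x ∈ A (res (Φ x) n) := fun x n => by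
    simpa [Φ, Equiv.ofBijective_apply_symm_apply] using hpoint (Φ x) n
  have mem_iff : ∀ x f n, x ∈ A (res f n) ↔ Φ x ∈ cylinder f n := by
    intro x f n
    rw [cylinder_eq_res, mem_ofPred]
    exact ⟨hres (mem_res_apply x n), fun h => h ▸ mem_res_apply x n⟩
  refine ⟨Φ, (isTopologicalBasis_cylinders fun _ => L).continuous_iff.2 ?_, mem_iff⟩
  rintro _ ⟨f, n, rfl⟩
  convert hopen (res f n) using 1
  ext x
  exact (mem_iff x f n).symm

end Scheme

/-! ### The scheme of intervals -/

/-- A scheme of subsets of the real line indexed by lists of pairs, latest letter first: the cell at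
`l` is split into its successors after deletion of `T l.length`. -/
structure IcoScheme (T : ℕ → Set ℝ) where
  cell : List (ℕ × ℕ) → Set ℝ
  left : List (ℕ × ℕ) → ℕ × ℕ → ℝ
  right : List (ℕ × ℕ) → ℕ × ℕ → ℝ
  cell_nil : cell [] = univ
  cell_cons : ∀ l k, cell (k :: l) = Ico (left l k) (right l k)
  isSplitting : ∀ l, IsSplitting (cell l) (T l.length) ((1 / 2) ^ l.length) (comap Prod.fst atTop)
    (left l) (right l)

namespace IcoScheme

variable {T : ℕ → Set ℝ}

theorem nonempty (hT : ∀ n, (T n).Subsingleton) : Nonempty (IcoScheme T) := by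
  choose left right hsplit using fun n (I : {I // IsCell I}) =>
    I.2.exists_isSplitting (hT n) (pow_pos one_half_pos n)
  let cell : List (ℕ × ℕ) → {I // IsCell I} := List.rec ⟨univ, .inl rfl⟩ fun k l I =>
    ⟨Ico (left l.length I k) (right l.length I k), .inr ⟨_, _, (hsplit _ I).lt k, rfl⟩⟩
  exact ⟨⟨fun l => (cell l).1, fun l => left l.length (cell l), fun l => right l.length (cell l),
    rfl, fun _ _ => rfl, fun l => hsplit l.length (cell l)⟩⟩

variable (c : IcoScheme T) {f : ℕ → ℕ × ℕ} {x y : ℝ}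

theorem iUnion_cell_cons (l : List (ℕ × ℕ)) : ⋃ k, c.cell (k :: l) = c.cell l \ T l.length := by
  rw [← (c.isSplitting l).iUnion_eq, iUnion_congr (c.cell_cons l)]

theorem disjoint_cell : CantorScheme.Disjoint c.cell := by
  intro l i j hij
  simpa only [Function.onFun, c.cell_cons] using (c.isSplitting l).disjoint hij

theorem notMem_of_forall_mem (hx : ∀ n, x ∈ c.cell (res f n)) (n : ℕ) : x ∉ T n := by
  have hmem := c.iUnion_cell_cons (res f n) ▸ mem_iUnion.2 ⟨f n, hx (n + 1)⟩
  rw [res_length] at hmem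
  exact hmem.2

theorem length_le (f : ℕ → ℕ × ℕ) (n : ℕ) :
    c.right (res f n) (f n) - c.left (res f n) (f n) ≤ (1 / 2) ^ n := by
  simpa using (c.isSplitting (res f n)).length_le (f n)

theorem le_of_forall_mem (hx : ∀ n, x ∈ c.cell (res f n)) (hy : ∀ n, y ∈ c.cell (res f n)) :
    x ≤ y := by
  have hbound : ∀ n : ℕ, x - y ≤ (1 / 2) ^ n := by
    intro n
    have hxn := hx (n + 1)
    have hyn := hy (n + 1)
    rw [res_succ, c.cell_cons] at hxn hyn
    linarith [hxn.2, hyn.1, c.length_le f n]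
  have hlim : Tendsto (fun n : ℕ => (1 / 2 : ℝ) ^ n) atTop (𝓝 0) :=
    tendsto_pow_atTop_nhds_zero_of_lt_one (by norm_num) (by norm_num)
  exact sub_nonpos.1 (ge_of_tendsto' hlim hbound)

theorem exists_forall_mem (f : ℕ → ℕ × ℕ) : ∃ x, ∀ n, x ∈ c.cell (res f n) := by
  let l n := c.left (res f n) (f n)
  let r n := c.right (res f n) (f n)
  have Icc_subset : ∀ n, Icc (l n) (r n) ⊆ c.cell (res f n) := fun n =>
    (c.isSplitting _).Icc_subset _
  have hanti : Antitone fun n => Icc (l n) (r n) := antitone_nat_of_succ_le fun n =>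
    (Icc_subset (n + 1)).trans ((c.cell_cons _ _).trans_subset Ico_subset_Icc_self)
  refine ⟨⨆ n, l n, fun n => Icc_subset n ?_⟩
  exact mem_iInter.1
    (ciSup_mem_iInter_Icc_of_antitone_Icc hanti fun n => ((c.isSplitting _).lt _).le) n

theorem existsUnique_forall_mem (f : ℕ → ℕ × ℕ) : ∃! x, ∀ n, x ∈ c.cell (res f n) := by
  obtain ⟨x, hx⟩ := c.exists_forall_mem f
  exact ⟨x, hx, fun y hy => (c.le_of_forall_mem hy hx).antisymm (c.le_of_forall_mem hx hy)⟩

end IcoScheme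

/-! ### Co-countable subspaces of the Sorgenfrey line -/

namespace SorgLine

/-- The identity of the Sorgenfrey line onto the reals. -/
def toReal : SorgLine ≃ ℝ := Equiv.refl ℝ

theorem isTopologicalBasis_Ico :
    TopologicalSpace.IsTopologicalBasis
      {s : Set SorgLine | ∃ a b : ℝ, s = toReal ⁻¹' Ico a b} where
  exists_subset_inter := by
    rintro _ ⟨a, b, rfl⟩ _ ⟨a', b', rfl⟩ x hx
    rw [← preimage_inter, Ico_inter_Ico] at hx ⊢
    exact ⟨_, ⟨_, _, rfl⟩, hx, Subset.rfl⟩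
  sUnion_eq := eq_univ_of_forall fun x => ⟨_, ⟨toReal x, toReal x + 1, rfl⟩, by simp⟩
  eq_generateFrom := rfl

theorem isOpen_preimage_Ico (a b : ℝ) : IsOpen (toReal ⁻¹' Ico a b) :=
  isTopologicalBasis_Ico.isOpen ⟨a, b, rfl⟩

theorem exists_preimage_Ico_subset {p : SorgLine} {U : Set SorgLine} (hU : U ∈ 𝓝 p) :
    ∃ b : ℝ, toReal p < b ∧ toReal ⁻¹' Ico (toReal p) b ⊆ U := by
  obtain ⟨_, ⟨a, b, rfl⟩, hp, hab⟩ := isTopologicalBasis_Ico.mem_nhds_iff.1 hU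
  exact ⟨b, hp.2, (preimage_mono (Ico_subset_Ico_left hp.1)).trans hab⟩

variable {T : ℕ → Set ℝ} (c : IcoScheme T) {S : Set SorgLine}

theorem exists_equiv_of_icoScheme (hS : ∀ x, x ∈ S ↔ ∀ n, toReal x ∉ T n) :
    ∃ Φ : S ≃ (ℕ → ℕ × ℕ), Continuous Φ ∧
      ∀ (x : S) f n, toReal x ∈ c.cell (res f n) ↔ Φ x ∈ cylinder f n := by
  refine exists_equiv_of_scheme (A := fun l => (fun x : S => toReal x) ⁻¹' c.cell l) ?_
    (fun l => ?_) (fun l i j hij => (c.disjoint_cell l hij).preimage _) (fun l => ?_) fun f => ?_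
  · simp [c.cell_nil]
  · ext x
    rw [← preimage_iUnion, c.iUnion_cell_cons]
    exact and_iff_left ((hS x).1 x.2 _)
  · obtain _ | ⟨k, l⟩ := l
    · simp [c.cell_nil]
    · rw [c.cell_cons]
      exact (isOpen_preimage_Ico _ _).preimage continuous_subtype_val
  · obtain ⟨x, hx, hunique⟩ := c.existsUnique_forall_mem f
    refine ⟨⟨toReal.symm x, (hS _).2 fun n => ?_⟩, fun n => ?_, fun y hy => Subtype.ext ?_⟩
    · simpa using c.notMem_of_forall_mem hx n
    · simpa using hx n
    · exact toReal.injective ((hunique _ hy).trans (toReal.apply_symm_apply x).symm)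

theorem isPiCoding_of_icoScheme {Φ : S ≃ (ℕ → ℕ × ℕ)} (hcont : Continuous Φ)
    (hΦ : ∀ (x : S) f n, toReal x ∈ c.cell (res f n) ↔ Φ x ∈ cylinder f n) : IsPiCoding Φ where
  continuous := hcont
  eventually_mem_shootFilter p U hU := by
    obtain ⟨V, hV, hVU⟩ := mem_nhds_subtype _ _ _ |>.1 hU
    obtain ⟨b, hpb, hbV⟩ := exists_preimage_Ico_subset hV
    obtain ⟨N, hN⟩ := exists_pow_lt_of_lt_one (sub_pos.2 hpb) one_half_lt_one
    filter_upwards [eventually_gt_atTop N] with n hn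
    obtain ⟨k, rfl⟩ := Nat.exists_eq_add_one.2 (N.zero_le.trans_lt hn)
    have mem_cell_succ : ∀ (x : S) (j : ℕ), toReal x ∈
        Ico (c.left (res (Φ x) j) (Φ x j)) (c.right (res (Φ x) j) (Φ x j)) := fun x j =>
      c.cell_cons _ _ ▸ (hΦ x (Φ x) (j + 1)).2 (self_mem_cylinder _ _)
    have hp := mem_cell_succ p k
    have hlength : c.right (res (Φ p) k) (Φ p k) - c.left (res (Φ p) k) (Φ p k) < b - toReal p :=
      (c.length_le (Φ p) k).trans_lt <| hN.trans_le' <|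
        pow_le_pow_of_le_one (by norm_num) (by norm_num) (Nat.lt_succ_iff.1 hn)
    have hcell : c.cell (res (Φ p) (k + 1)) = Ico _ _ := c.cell_cons (res (Φ p) k) (Φ p k)
    obtain ⟨m, -, hm⟩ := (atTop_basis.comap Prod.fst).eventually_iff.1 <|
      (c.isSplitting (res (Φ p) (k + 1))).eventually_le (hcell ▸ bddAbove_Ico) _ (hcell ▸ hp)
    refine mem_shootFilter.2 ⟨m, fun x hx hxp => hVU <| hbV ⟨?_, ?_⟩⟩
    · rw [cylinder_eq_res] at hxp
      have hpx := hm (x := Φ x (k + 1)) hx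
      rw [← mem_ofPred.1 hxp] at hpx
      exact hpx.trans (mem_cell_succ x (k + 1)).1
    · have hxp' := hcell ▸ (hΦ x (Φ p) (k + 1)).2 hxp
      linarith [hxp'.2, hp.1]

theorem exists_isPiCoding (hS : Sᶜ.Countable) : ∃ Φ : S ≃ (ℕ → ℕ × ℕ), IsPiCoding Φ := by
  have : Nonempty SorgLine := ⟨toReal.symm 0⟩
  obtain ⟨q, hq⟩ := countable_iff_exists_subset_range.1 hS
  obtain ⟨c⟩ := IcoScheme.nonempty (T := fun n => toReal '' (Sᶜ ∩ {q n})) fun n =>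
    (subsingleton_singleton.anti inter_subset_right).image _
  have hST : ∀ x, x ∈ S ↔ ∀ n, toReal x ∉ toReal '' (Sᶜ ∩ {q n}) := by
    intro x
    simp only [toReal.injective.mem_set_image, mem_inter_iff, mem_singleton_iff]
    refine ⟨fun hx n h => h.1 hx, fun h => by_contra fun hx => ?_⟩
    obtain ⟨n, rfl⟩ := hq hx
    exact h n ⟨hx, rfl⟩
  obtain ⟨Φ, hcont, hΦ⟩ := exists_equiv_of_icoScheme c hST
  exact ⟨Φ, isPiCoding_of_icoScheme c hcont hΦ⟩

end SorgLine

/-- Corollary `cor.rise.in.N.and.sorg.line` of the paper: each factor is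
(homeomorphic to) the Baire space or to a co-countable subspace of the
Sorgenfrey line. -/
theorem product_of_baire_and_cocountable_sorgenfrey_has_piTree
    {A : Type} [Countable A] [Nonempty A]
    {X : A → Type u} [∀ a, TopologicalSpace (X a)]
    (hX : ∀ a, Nonempty (X a ≃ₜ (ℕ → ℕ)) ∨
      ∃ S : Set SorgLine, Sᶜ.Countable ∧ Nonempty (X a ≃ₜ ↥S)) :
    ∃ F : FoliageTree (∀ a, X a), F.IsPiTree := by
  have hcoding : ∀ a, ∃ Φ : X a ≃ (ℕ → ℕ × ℕ), IsPiCoding Φ := by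
    intro a
    obtain ⟨⟨h⟩⟩ | ⟨S, hS, ⟨h⟩⟩ := hX a
    · exact IsPiCoding.exists_of_homeomorph_baire h
    · obtain ⟨Φ, hΦ⟩ := SorgLine.exists_isPiCoding hS
      exact ⟨_, hΦ.comp_homeomorph h⟩
  obtain ⟨Ψ, hΨ⟩ := exists_isPiCoding_pi hcoding
  exact hΨ.exists_isPiTree
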